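/- arXiv:1303.2388 — 5 statements merged into one kernel-verified Lean document; each statement's English description precedes it below -/
import Mathlib

section
/- Strong duality for information relaxation: assume the primal value V := sup_{u ∈ 𝒰_F} 𝔼[R(u, ·)] is finite, and define h*(u, ω) := R(u, ω) − V. Then (i) h* is a dual feasible penalty, i.e. 𝔼[h*(u, ·)] ≤ 0 for every u ∈ 𝒰_F; (ii) for every ω ∈ Ω, sup_{u ∈ 𝒰} (R(u, ω) − h*(u, ω)) = V; and consequently (iii) the infimum over all dual feasible penalties h of 𝔼[sup_{u ∈ 𝒰} (R(u, ω) − h(u, ω))] equals V and is attained at h = h*. -/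
open MeasureTheory

/-- **Weak duality**: the expected pathwise supremum of the penalized reward dominates the
expected reward of any strategy whose penalty has nonpositive expectation. -/
theorem integral_le_integral_iSup_sub_of_integral_nonpos
    {Ω U : Type*} [MeasurableSpace Ω] {P : Measure Ω} {R h : U → Ω → ℝ} {u : U}
    (hR : Integrable (R u) P) (hh : Integrable (h u) P) (hle : ∫ ω, h u ω ∂P ≤ 0)
    (hbdd : ∀ ω, BddAbove (Set.range fun v : U => R v ω - h v ω))
    (hsup : Integrable (fun ω => ⨆ v : U, (R v ω - h v ω)) P) :
    ∫ ω, R u ω ∂P ≤ ∫ ω, (⨆ v : U, (R v ω - h v ω)) ∂P := by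
  have hmono : ∫ ω, (R u ω - h u ω) ∂P ≤ ∫ ω, (⨆ v : U, (R v ω - h v ω)) ∂P :=
    integral_mono (hR.sub hh) hsup fun ω => le_ciSup (hbdd ω) u
  rw [integral_sub hR hh] at hmono
  linarith

/-- **Strong duality for information relaxation.**
Let `(Ω, 𝒢, P)` be a probability space, `U` the set of all (possibly anticipative) control
strategies and `UF ⊆ U` the nonempty set of nonanticipative strategies, with `R u` integrable
for `u ∈ UF`.  Assume the primal value `V = sup_{u ∈ UF} 𝔼[R u]` is finite, and define the
penalty `hStar u ω = R u ω - V`.  Then: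
(i) `hStar` is a dual feasible penalty, i.e. `𝔼[hStar u] ≤ 0` for every `u ∈ UF`;
(ii) for every `ω`, `sup_{u ∈ U} (R u ω - hStar u ω) = V`;
(iii) the infimum over all dual feasible penalties `h` of `𝔼[sup_{u ∈ U} (R u ω - h u ω)]`
equals `V` and is attained (membership of `V` in the set of dual values being witnessed by
`h = hStar`, thanks to (i) and (ii)). -/
theorem strong_duality_information_relaxation
    {Ω U : Type*} [MeasurableSpace Ω] (P : Measure Ω) [IsProbabilityMeasure P]
    (UF : Set U) (hUF : UF.Nonempty)
    (R : U → Ω → ℝ)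
    (hRint : ∀ u ∈ UF, Integrable (R u) P)
    (hfin : BddAbove (Set.range fun u : UF => ∫ ω, R u.1 ω ∂P))
    (V : ℝ) (hVdef : V = ⨆ u : UF, ∫ ω, R u.1 ω ∂P)
    (hStar : U → Ω → ℝ) (hhStar : ∀ u ω, hStar u ω = R u ω - V) :
    (∀ u ∈ UF, (∫ ω, hStar u ω ∂P) ≤ 0) ∧
    (∀ ω, (⨆ u : U, (R u ω - hStar u ω)) = V) ∧
    IsLeast {y : ℝ | ∃ h : U → Ω → ℝ,
      (∀ u ∈ UF, Integrable (h u) P) ∧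
      (∀ u ∈ UF, (∫ ω, h u ω ∂P) ≤ 0) ∧
      (∀ ω, BddAbove (Set.range fun u : U => R u ω - h u ω)) ∧
      Integrable (fun ω => ⨆ u : U, (R u ω - h u ω)) P ∧
      y = ∫ ω, (⨆ u : U, (R u ω - h u ω)) ∂P} V := by
  obtain rfl : hStar = fun u ω => R u ω - V := funext₂ hhStar
  have : Nonempty UF := hUF.to_subtype
  have : Nonempty U := hUF.nonempty
  have hfeas : ∀ u ∈ UF, ∫ ω, (R u ω - V) ∂P ≤ 0 := fun u hu => by
    have hle : ∫ ω, R u ω ∂P ≤ V := hVdef ▸ le_ciSup hfin ⟨u, hu⟩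
    rw [integral_sub (hRint u hu) (integrable_const V)]
    simpa using hle
  refine ⟨hfeas, fun ω => by simp, ⟨fun u ω => R u ω - V, ?_, hfeas, ?_, ?_, ?_⟩, ?_⟩
  · exact fun u hu => (hRint u hu).sub (integrable_const V)
  · exact fun ω => ⟨V, by rintro _ ⟨u, rfl⟩; simp⟩
  · simp
  · simp
  · rintro _ ⟨h, hint, hle, hbdd, hsup, rfl⟩
    rw [hVdef]
    exact ciSup_le fun u => integral_le_integral_iSup_sub_of_integral_nonpos
      (hRint u u.2) (hint u u.2) (hle u u.2) hbdd hsup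
end

section
/- Complementary slackness: assume the primal value V := sup_{u ∈ 𝒰_F} 𝔼[R(u, ·)] is finite, so that by strong duality inf over dual feasible penalties h of 𝔼[S_h] equals V, where S_h(ω) := sup_{u ∈ 𝒰} (R(u, ω) − h(u, ω)). Let u° ∈ 𝒰_F and let h° be a dual feasible penalty with S_{h°} measurable and integrable. Then u° is optimal for the primal problem (𝔼[R(u°, ·)] = V) and h° is optimal for the dual problem (𝔼[S_{h°}] = V) if and only if 𝔼[h°(u°, ·)] = 0 and 𝔼[R(u°, ·) − h°(u°, ·)] = 𝔼[S_{h°}]. -/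
open MeasureTheory

/-- The expected penalized reward of a strategy is at most the expected pathwise supremum. -/
theorem integral_sub_integral_le_integral_iSup_sub
    {Ω U : Type*} [MeasurableSpace Ω] {P : Measure Ω} {R h : U → Ω → ℝ} {u : U}
    (hR : Integrable (R u) P) (hh : Integrable (h u) P)
    (hBdd : ∀ ω, BddAbove (Set.range fun v : U => R v ω - h v ω))
    (hS : Integrable (fun ω => ⨆ v : U, (R v ω - h v ω)) P) :
    (∫ ω, R u ω ∂P) - ∫ ω, h u ω ∂P ≤ ∫ ω, (⨆ v : U, (R v ω - h v ω)) ∂P := by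
  rw [← integral_sub hR hh]
  exact integral_mono (hR.sub hh) hS fun ω => le_ciSup (hBdd ω) u

/-- **Complementary slackness for information relaxation.**
Let `(Ω, 𝒢, P)` be a probability space, `U` the set of all (possibly anticipative) control
strategies, `UF ⊆ U` the nonempty set of nonanticipative strategies, with `R u` integrable for
`u ∈ UF`, and assume the primal value `V = sup_{u ∈ UF} 𝔼[R u]` is finite.  Let `u0 ∈ UF` and
let `h0` be a dual feasible penalty whose pathwise relaxed reward
`S(ω) = ⨆ u, (R u ω - h0 u ω)` is (well-defined, measurable and) integrable.  Then `u0` is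
optimal for the primal problem (`𝔼[R u0] = V`) and `h0` is optimal for the dual problem
(`𝔼[S] = V`) if and only if `𝔼[h0 u0] = 0` and `𝔼[R u0 - h0 u0] = 𝔼[S]`. -/
theorem complementary_slackness_information_relaxation
    {Ω U : Type*} [MeasurableSpace Ω] (P : Measure Ω) [IsProbabilityMeasure P]
    (UF : Set U) (hUF : UF.Nonempty)
    (R : U → Ω → ℝ)
    (hRint : ∀ u ∈ UF, Integrable (R u) P)
    (hfin : BddAbove (Set.range fun u : UF => ∫ ω, R u.1 ω ∂P))
    (V : ℝ) (hVdef : V = ⨆ u : UF, ∫ ω, R u.1 ω ∂P)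
    (u0 : U) (hu0 : u0 ∈ UF)
    (h0 : U → Ω → ℝ)
    (hint : ∀ u ∈ UF, Integrable (h0 u) P)
    (hfeas : ∀ u ∈ UF, (∫ ω, h0 u ω ∂P) ≤ 0)
    (hBdd : ∀ ω, BddAbove (Set.range fun u : U => R u ω - h0 u ω))
    (hSint : Integrable (fun ω => ⨆ u : U, (R u ω - h0 u ω)) P) :
    ((∫ ω, R u0 ω ∂P = V) ∧ ((∫ ω, (⨆ u : U, (R u ω - h0 u ω)) ∂P) = V)) ↔
    ((∫ ω, h0 u0 ω ∂P = 0) ∧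
      ((∫ ω, (R u0 ω - h0 u0 ω) ∂P) = ∫ ω, (⨆ u : U, (R u ω - h0 u ω)) ∂P)) := by
  have hle : ∀ u ∈ UF, (∫ ω, R u ω ∂P) - ∫ ω, h0 u ω ∂P ≤
      ∫ ω, (⨆ u : U, (R u ω - h0 u ω)) ∂P := fun u hu =>
    integral_sub_integral_le_integral_iSup_sub (hRint u hu) (hint u hu) hBdd hSint
  have hprimal : ∫ ω, R u0 ω ∂P ≤ V := hVdef ▸ le_ciSup hfin ⟨u0, hu0⟩
  have hweak : V ≤ ∫ ω, (⨆ u : U, (R u ω - h0 u ω)) ∂P := by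
    have : Nonempty UF := hUF.to_subtype
    rw [hVdef]
    exact ciSup_le fun u => by linarith [hle u u.2, hfeas u u.2]
  have hle0 := hle u0 hu0
  have hfeas0 := hfeas u0 hu0
  rw [integral_sub (hRint u0 hu0) (hint u0 hu0)]
  constructor
  · rintro ⟨hopt, hdual⟩
    constructor <;> linarith
  · rintro ⟨hzero, heq⟩
    constructor <;> linarith
end

section
/- Weak duality for finite-horizon Markov decision processes: let M : 𝒜^K × 𝒱^K → ℝ be a dual feasible penalty, and assume that for the fixed initial state x the map v ↦ sup_{a ∈ 𝒜^K} (R(a, v) − M(a, v)) is measurable and integrable with respect to μ^{⊗K}. Then the optimal value over nonanticipative policies satisfies sup_{nonanticipative a} 𝔼_{v ∼ μ^{⊗K}}[R(a(v), v)] ≤ 𝔼_{v ∼ μ^{⊗K}}[ sup_{a ∈ 𝒜^K} ( R(a, v) − M(a, v) ) ]. -/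
open MeasureTheory

/-- The controlled trajectory of a finite-horizon MDP: `x_0 = x`,
`x_{k+1} = f x_k a_k v_{k+1}` for `k < K` (constant after time `K`). -/
def mdpTraj {X A V : Type*} (f : X → A → V → X) (K : ℕ) (x : X)
    (a : Fin K → A) (v : Fin K → V) : ℕ → X
  | 0 => x
  | n + 1 =>
    if h : n < K then f (mdpTraj f K x a v n) (a ⟨n, h⟩) (v ⟨n, h⟩)
    else mdpTraj f K x a v n

/-- Total reward `Σ_{k=0}^{K-1} g_k(x_k, a_k) + Λ(x_K)` of the action sequence `a`
under the noise realization `v`, starting from `x`. -/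
def mdpReward {X A V : Type*} (f : X → A → V → X) (K : ℕ)
    (g : ℕ → X → A → ℝ) (Λ : X → ℝ) (x : X) (a : Fin K → A) (v : Fin K → V) : ℝ :=
  (∑ k : Fin K, g k (mdpTraj f K x a v k) (a k)) + Λ (mdpTraj f K x a v K)

/-- A nonanticipative policy: each `p k` is a measurable function of the noise that
depends only on the noises `v_1, …, v_k` (indices `j < k`); in particular the time-0
action is deterministic. -/
def Nonanticipative {A V : Type*} [MeasurableSpace A] [MeasurableSpace V] (K : ℕ)
    (p : Fin K → (Fin K → V) → A) : Prop :=
  (∀ k, Measurable (p k)) ∧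
  ∀ (k : Fin K) (v v' : Fin K → V),
    (∀ j : Fin K, (j : ℕ) < (k : ℕ) → v j = v' j) → p k v = p k v'

/-- **Weak duality for finite-horizon Markov decision processes** (Theorem 1(a)).
If `M` is a dual feasible penalty (its expectation along every nonanticipative policy is
`≤ 0`), and the pathwise relaxed reward `v ↦ sup_{a ∈ 𝒜^K} (R(a,v) - M(a,v))` is
(well-defined, measurable and) integrable w.r.t. the product noise law `μ^{⊗K}`, then the
optimal expected reward over nonanticipative policies is bounded above by
`𝔼_{v ∼ μ^{⊗K}}[sup_{a ∈ 𝒜^K} (R(a,v) - M(a,v))]`. -/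
theorem mdp_weak_duality
    {X A V : Type*} [MeasurableSpace X] [MeasurableSpace A] [MeasurableSpace V]
    [Nonempty A]
    (μ : Measure V) [IsProbabilityMeasure μ]
    (K : ℕ) (hK : 1 ≤ K)
    (f : X → A → V → X) (hf : Measurable fun q : X × A × V => f q.1 q.2.1 q.2.2)
    (g : ℕ → X → A → ℝ) (hg : ∀ k, Measurable fun q : X × A => g k q.1 q.2)
    (hgbd : ∃ C, ∀ k x a, |g k x a| ≤ C)
    (Λ : X → ℝ) (hΛ : Measurable Λ) (hΛbd : ∃ C, ∀ x, |Λ x| ≤ C)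
    (x : X)
    (M : (Fin K → A) → (Fin K → V) → ℝ)
    (hMint : ∀ p : Fin K → (Fin K → V) → A, Nonanticipative K p →
      Integrable (fun v => M (fun k => p k v) v) (Measure.pi fun _ : Fin K => μ))
    (hMfeas : ∀ p : Fin K → (Fin K → V) → A, Nonanticipative K p →
      (∫ v, M (fun k => p k v) v ∂(Measure.pi fun _ : Fin K => μ)) ≤ 0)
    (hRint : ∀ p : Fin K → (Fin K → V) → A, Nonanticipative K p →
      Integrable (fun v => mdpReward f K g Λ x (fun k => p k v) v)
        (Measure.pi fun _ : Fin K => μ))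
    (hBdd : ∀ v : Fin K → V,
      BddAbove (Set.range fun a : Fin K → A => mdpReward f K g Λ x a v - M a v))
    (hSint : Integrable
      (fun v => ⨆ a : Fin K → A, (mdpReward f K g Λ x a v - M a v))
      (Measure.pi fun _ : Fin K => μ)) :
    (⨆ p : {p : Fin K → (Fin K → V) → A // Nonanticipative K p},
        ∫ v, mdpReward f K g Λ x (fun k => p.1 k v) v ∂(Measure.pi fun _ : Fin K => μ))
      ≤ ∫ v, (⨆ a : Fin K → A, (mdpReward f K g Λ x a v - M a v))
          ∂(Measure.pi fun _ : Fin K => μ) := by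
  have : Nonempty {p : Fin K → (Fin K → V) → A // Nonanticipative K p} :=
    ⟨⟨fun _ _ => Classical.arbitrary A, fun _ => measurable_const, fun _ _ _ _ => rfl⟩⟩
  refine ciSup_le fun ⟨p, hp⟩ => ?_
  calc ∫ v, mdpReward f K g Λ x (fun k => p k v) v ∂(Measure.pi fun _ : Fin K => μ)
      ≤ (∫ v, mdpReward f K g Λ x (fun k => p k v) v ∂(Measure.pi fun _ : Fin K => μ))
          - ∫ v, M (fun k => p k v) v ∂(Measure.pi fun _ : Fin K => μ) :=
        le_sub_self_iff _ |>.2 (hMfeas p hp)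
    _ = ∫ v, (mdpReward f K g Λ x (fun k => p k v) v - M (fun k => p k v) v)
          ∂(Measure.pi fun _ : Fin K => μ) :=
        (integral_sub (hRint p hp) (hMint p hp)).symm
    _ ≤ _ := integral_mono ((hRint p hp).sub (hMint p hp)) hSint
        fun v => le_ciSup (hBdd v) fun k => p k v
end

section
/- Pathwise strong duality for the value-function-based penalty: assume V_0,…,V_K are bounded measurable functions satisfying the Bellman recursion V_K = Λ and V_k(x) = sup_{a ∈ 𝒜} { g_k(x, a) + ∫_𝒱 V_{k+1}(f(x, a, v')) μ(dv') } for k = 0,…,K−1. Then for every initial state x and every fixed noise realization v ∈ 𝒱^K, sup_{a ∈ 𝒜^K} { Σ_{k=0}^{K−1} g_k(x_k, a_k) + Λ(x_K) − Σ_{k=0}^{K−1} ( V_{k+1}(x_{k+1}) − ∫_𝒱 V_{k+1}(f(x_k, a_k, v')) μ(dv') ) } = V_0(x), where x_k is the trajectory generated from x by (a, v). -/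
open MeasureTheory

/-- The value-function-based penalty
`M*(a,v) = Σ_{k=0}^{K-1} ( W_{k+1}(x_{k+1}) - ∫ W_{k+1}(f(x_k, a_k, v')) μ(dv') )`,
where `x_k` is the trajectory generated from `x` by `(a, v)` and `W_k` are the
value functions. -/
noncomputable def MstarPenalty {X A V : Type*} [MeasurableSpace V] (f : X → A → V → X)
    (K : ℕ) (W : ℕ → X → ℝ) (μ : Measure V) (x : X) (a : Fin K → A) (v : Fin K → V) : ℝ :=
  ∑ k : Fin K,
    (W ((k : ℕ) + 1) (mdpTraj f K x a v ((k : ℕ) + 1)) -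
      ∫ v', W ((k : ℕ) + 1) (f (mdpTraj f K x a v (k : ℕ)) (a k) v') ∂μ)

/-- Every feedback policy `π` is realized along a fixed noise path by an open-loop action
sequence. -/
lemma exists_actions_eq_policy {X A V : Type*} (f : X → A → V → X) (K : ℕ) (x : X)
    (v : Fin K → V) (π : ℕ → X → A) :
    ∃ a : Fin K → A, ∀ k : Fin K, a k = π k (mdpTraj f K x a v k) := by
  let y : ℕ → X := fun n =>
    Nat.rec x (fun n z => if h : n < K then f z (π n z) (v ⟨n, h⟩) else z) n
  have hy : ∀ n, mdpTraj f K x (fun k => π k (y k)) v n = y n := by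
    intro n
    induction n with
    | zero => rfl
    | succ n ih => rw [mdpTraj, ih]
  exact ⟨fun k => π k (y k), fun k => by rw [hy]⟩

/-- The penalized reward telescopes into the initial value plus the Bellman gaps along the
trajectory. -/
lemma mdpReward_sub_MstarPenalty {X A V : Type*} [MeasurableSpace V] (μ : Measure V) (K : ℕ)
    (f : X → A → V → X) (g : ℕ → X → A → ℝ) (Λ : X → ℝ) (W : ℕ → X → ℝ)
    (hWK : ∀ x, W K x = Λ x) (x : X) (a : Fin K → A) (v : Fin K → V) :
    mdpReward f K g Λ x a v - MstarPenalty f K W μ x a v =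
      W 0 x + ∑ k : Fin K,
        (g k (mdpTraj f K x a v k) (a k)
          + ∫ v', W ((k : ℕ) + 1) (f (mdpTraj f K x a v k) (a k) v') ∂μ
          - W k (mdpTraj f K x a v k)) := by
  have htel := Finset.sum_range_sub (fun k => W k (mdpTraj f K x a v k)) K
  rw [← Fin.sum_univ_eq_sum_range (fun k =>
    W (k + 1) (mdpTraj f K x a v (k + 1)) - W k (mdpTraj f K x a v k))] at htel
  have h0 : mdpTraj f K x a v 0 = x := rfl
  simp only [h0, hWK, Finset.sum_sub_distrib] at htel
  simp only [mdpReward, MstarPenalty, Finset.sum_sub_distrib, Finset.sum_add_distrib]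
  linarith

/-- **Pathwise strong duality for the value-function-based penalty.**
If the bounded measurable functions `W_0, …, W_K` satisfy the Bellman recursion
`W_K = Λ` and `W_k(x) = sup_{a ∈ 𝒜} { g_k(x,a) + ∫ W_{k+1}(f(x,a,v')) μ(dv') }` for `k < K`,
then for every initial state `x` and every fixed noise realization `v ∈ 𝒱^K`, the inner
(deterministic) optimization problem with the value-function-based penalty `M*` has optimal
value `W_0(x)`:
`sup_{a ∈ 𝒜^K} { Σ_k g_k(x_k,a_k) + Λ(x_K) - M*(a,v) } = W_0(x)`. -/
theorem mstar_pathwise_strong_duality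
    {X A V : Type*} [MeasurableSpace X] [MeasurableSpace A] [MeasurableSpace V]
    [Nonempty A]
    (μ : Measure V) [IsProbabilityMeasure μ]
    (K : ℕ) (hK : 1 ≤ K)
    (f : X → A → V → X) (hf : Measurable fun q : X × A × V => f q.1 q.2.1 q.2.2)
    (g : ℕ → X → A → ℝ) (hg : ∀ k, Measurable fun q : X × A => g k q.1 q.2)
    (hgbd : ∃ C, ∀ k x a, |g k x a| ≤ C)
    (Λ : X → ℝ) (hΛ : Measurable Λ) (hΛbd : ∃ C, ∀ x, |Λ x| ≤ C)
    (W : ℕ → X → ℝ) (hWmeas : ∀ k, Measurable (W k)) (hWbd : ∃ C, ∀ k x, |W k x| ≤ C)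
    (hWK : ∀ x, W K x = Λ x)
    (hBellman : ∀ k < K, ∀ x : X,
      W k x = ⨆ a : A, (g k x a + ∫ v', W (k + 1) (f x a v') ∂μ)) :
    ∀ (x : X) (v : Fin K → V),
      (⨆ a : Fin K → A,
        (mdpReward f K g Λ x a v - MstarPenalty f K W μ x a v)) = W 0 x := by
  intro x v
  obtain ⟨Cg, hCg⟩ := hgbd
  obtain ⟨CW, hCW⟩ := hWbd
  have hbdd : ∀ k x, BddAbove (Set.range fun a : A =>
      g k x a + ∫ v', W (k + 1) (f x a v') ∂μ) := by
    intro k x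
    refine ⟨Cg + CW, ?_⟩
    rintro _ ⟨a, rfl⟩
    have hint : ‖∫ v', W (k + 1) (f x a v') ∂μ‖ ≤ CW := by
      simpa using norm_integral_le_of_norm_le_const (μ := μ)
        (f := fun v' => W (k + 1) (f x a v')) (C := CW)
        (Filter.Eventually.of_forall fun v' => hCW (k + 1) (f x a v'))
    exact add_le_add ((le_abs_self _).trans (hCg k x a)) ((le_abs_self _).trans hint)
  simp only [mdpReward_sub_MstarPenalty μ K f g Λ W hWK]
  refine ciSup_eq_of_forall_le_of_forall_lt_exists_gt (fun a => ?_) (fun w hw => ?_)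
  · refine add_le_of_nonpos_right (Finset.sum_nonpos fun k _ => sub_nonpos.2 ?_)
    rw [hBellman k k.isLt]
    exact le_ciSup (hbdd k (mdpTraj f K x a v k)) (a k)
  · have hKpos : (0 : ℝ) < K := by exact_mod_cast hK
    have hε : 0 < (W 0 x - w) / K := div_pos (sub_pos.2 hw) hKpos
    have hex : ∀ k z, ∃ b : A, k < K →
        W k z - (W 0 x - w) / K < g k z b + ∫ v', W (k + 1) (f z b v') ∂μ := by
      intro k z
      by_cases hk : k < K
      · obtain ⟨b, hb⟩ := exists_lt_of_lt_ciSup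
          ((sub_lt_self (W k z) hε).trans_eq (hBellman k hk z))
        exact ⟨b, fun _ => hb⟩
      · exact ⟨Classical.arbitrary A, fun h => absurd h hk⟩
    choose π hπ using hex
    obtain ⟨a, ha⟩ := exists_actions_eq_policy f K x v π
    refine ⟨a, ?_⟩
    have hsum : ∑ _k : Fin K, -((W 0 x - w) / K) < ∑ k : Fin K,
        (g k (mdpTraj f K x a v k) (a k)
          + ∫ v', W ((k : ℕ) + 1) (f (mdpTraj f K x a v k) (a k) v') ∂μ
          - W k (mdpTraj f K x a v k)) := by
      refine Finset.sum_lt_sum_of_nonempty ⟨⟨0, hK⟩, Finset.mem_univ _⟩ fun k _ => ?_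
      have hk := hπ k (mdpTraj f K x a v k) k.isLt
      rw [← ha k] at hk
      linarith
    have hconst : ∑ _k : Fin K, -((W 0 x - w) / K) = -(W 0 x - w) := by
      simp only [Finset.sum_const, Finset.card_univ, Fintype.card_fin, nsmul_eq_mul]
      field_simp
    linarith
end

section
/- Optimality of the gradient-based penalty for MDPs with concave terminal reward (Appendix D): let 𝒜 ⊆ ℝ^d be convex, and for each noise realization v ∈ 𝒱^K let F(·, v) : ℝ^{Kd} → ℝ be concave and differentiable, with F(a, v) representing the terminal reward Λ(x_K(a, v)) of the action sequence a ∈ 𝒜^K. Let a* be a nonanticipative policy and define the gradient-based penalty M_g*(a, v) := ∇_a F(a*(v), v)ᵀ (a − a*(v)). Then: (i) for every fixed v, sup_{a ∈ 𝒜^K} [ F(a, v) − M_g*(a, v) ] = F(a*(v), v); (ii) if the first-order condition 𝔼_{v ∼ μ^{⊗K}}[ ∇_a F(a*(v), v)ᵀ (a(v) − a*(v)) ] ≤ 0 holds for every nonanticipative policy a, then M_g* is a dual feasible penalty; and (iii) if moreover a* is an optimal nonanticipative policy, i.e. 𝔼[F(a*(v), v)] = V_0(x) := sup over nonanticipative policies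 of the expected reward, then 𝔼_{v ∼ μ^{⊗K}}[ sup_{a ∈ 𝒜^K} ( F(a, v) − M_g*(a, v) ) ] = V_0(x), i.e. M_g* achieves strong duality. -/
open MeasureTheory

/-- A concave function lies below its tangent hyperplane at any point of differentiability. -/
theorem ConcaveOn.le_add_fderiv_sub {E : Type*} [NormedAddCommGroup E] [NormedSpace ℝ E]
    {f : E → ℝ} (hf : ConcaveOn ℝ Set.univ f) {x : E} (hx : DifferentiableAt ℝ f x) (y : E) :
    f y ≤ f x + fderiv ℝ f x (y - x) := by
  have hconc : ConcaveOn ℝ Set.univ (f ∘ AffineMap.lineMap (k := ℝ) x y) :=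
    hf.comp_affineMap _
  have hderiv : HasDerivAt (f ∘ AffineMap.lineMap (k := ℝ) x y) (fderiv ℝ f x (y - x)) 0 :=
    HasFDerivAt.comp_hasDerivAt_of_eq 0 hx.hasFDerivAt AffineMap.hasDerivAt_lineMap (by simp)
  have hslope := hconc.slope_le_of_hasDerivAt (Set.mem_univ 0) (Set.mem_univ 1) one_pos hderiv
  simp only [slope_def_field, Function.comp_apply, AffineMap.lineMap_apply_one,
    AffineMap.lineMap_apply_zero, sub_zero, div_one] at hslope
  linarith

/-- **Optimality of the gradient-based penalty for MDPs with concave terminal reward**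
(Appendix D).  The action set `Aset ⊆ ℝ^d` is convex; for each noise realization `v ∈ 𝒱^K`
the terminal reward `F(·, v) : ℝ^{Kd} → ℝ` is concave and differentiable; `pstar` is a
nonanticipative policy with values in `Aset`, with realized action sequence
`astar(v) = (pstar k v)_k`, and the gradient-based penalty is
`Mg(a, v) = ∇_a F(astar(v), v)ᵀ (a − astar(v))` (the Fréchet derivative of `F(·,v)` at
`astar(v)` applied to `a − astar(v)`).  Then:
(i) for every `v`, `sup_{a ∈ Aset^K} [F(a,v) − Mg(a,v)] = F(astar(v), v)`;
(ii) if the first-order condition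
`𝔼_{v ∼ μ^{⊗K}}[∇_a F(astar(v), v)ᵀ (a(v) − astar(v))] ≤ 0` holds for every nonanticipative
policy `a` with values in `Aset`, then `Mg` is a dual feasible penalty;
(iii) if moreover `pstar` is an optimal nonanticipative policy, i.e.
`𝔼[F(astar(v), v)]` equals `V_0 = sup` over nonanticipative policies of the expected
reward, then `𝔼[ sup_{a ∈ Aset^K} (F(a,v) − Mg(a,v)) ] = V_0`: `Mg` achieves strong
duality. -/
theorem gradient_penalty_strong_duality
    {d K : ℕ} {Vn : Type*} [MeasurableSpace Vn]
    (μ : Measure Vn) [IsProbabilityMeasure μ]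
    (Aset : Set (EuclideanSpace ℝ (Fin d))) (hAconv : Convex ℝ Aset)
    (F : (Fin K → EuclideanSpace ℝ (Fin d)) → (Fin K → Vn) → ℝ)
    (hFconc : ∀ v : Fin K → Vn, ConcaveOn ℝ Set.univ fun a => F a v)
    (hFdiff : ∀ v : Fin K → Vn, Differentiable ℝ fun a => F a v)
    (pstar : Fin K → (Fin K → Vn) → EuclideanSpace ℝ (Fin d))
    (hpstar : Nonanticipative K pstar)
    (hpstarA : ∀ (v : Fin K → Vn) (k : Fin K), pstar k v ∈ Aset)
    (Mg : (Fin K → EuclideanSpace ℝ (Fin d)) → (Fin K → Vn) → ℝ)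
    (hMg : ∀ (a : Fin K → EuclideanSpace ℝ (Fin d)) (v : Fin K → Vn),
      Mg a v = fderiv ℝ (fun b => F b v) (fun k => pstar k v)
        (a - fun k => pstar k v)) :
    (∀ v : Fin K → Vn,
      (⨆ a : {a : Fin K → EuclideanSpace ℝ (Fin d) // ∀ k, a k ∈ Aset},
        (F a.1 v - Mg a.1 v)) = F (fun k => pstar k v) v) ∧
    ((∀ q : Fin K → (Fin K → Vn) → EuclideanSpace ℝ (Fin d),
        Nonanticipative K q → (∀ (v : Fin K → Vn) (k : Fin K), q k v ∈ Aset) →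
        (∫ v, fderiv ℝ (fun b => F b v) (fun k => pstar k v)
            ((fun k => q k v) - fun k => pstar k v)
          ∂(Measure.pi fun _ : Fin K => μ)) ≤ 0) →
      ∀ q : Fin K → (Fin K → Vn) → EuclideanSpace ℝ (Fin d),
        Nonanticipative K q → (∀ (v : Fin K → Vn) (k : Fin K), q k v ∈ Aset) →
        (∫ v, Mg (fun k => q k v) v ∂(Measure.pi fun _ : Fin K => μ)) ≤ 0) ∧
    ((∫ v, F (fun k => pstar k v) v ∂(Measure.pi fun _ : Fin K => μ)) =
        (⨆ q : {q : Fin K → (Fin K → Vn) → EuclideanSpace ℝ (Fin d) //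
            Nonanticipative K q ∧ ∀ (v : Fin K → Vn) (k : Fin K), q k v ∈ Aset},
          ∫ v, F (fun k => q.1 k v) v ∂(Measure.pi fun _ : Fin K => μ)) →
      (∫ v, (⨆ a : {a : Fin K → EuclideanSpace ℝ (Fin d) // ∀ k, a k ∈ Aset},
          (F a.1 v - Mg a.1 v)) ∂(Measure.pi fun _ : Fin K => μ)) =
        ⨆ q : {q : Fin K → (Fin K → Vn) → EuclideanSpace ℝ (Fin d) //
            Nonanticipative K q ∧ ∀ (v : Fin K → Vn) (k : Fin K), q k v ∈ Aset},
          ∫ v, F (fun k => q.1 k v) v ∂(Measure.pi fun _ : Fin K => μ)) := by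
  have hsup : ∀ v : Fin K → Vn,
      (⨆ a : {a : Fin K → EuclideanSpace ℝ (Fin d) // ∀ k, a k ∈ Aset},
        (F a.1 v - Mg a.1 v)) = F (fun k => pstar k v) v := by
    intro v
    have : Nonempty {a : Fin K → EuclideanSpace ℝ (Fin d) // ∀ k, a k ∈ Aset} :=
      ⟨⟨fun k => pstar k v, hpstarA v⟩⟩
    refine IsLUB.ciSup_eq (IsGreatest.isLUB ⟨⟨⟨fun k => pstar k v, hpstarA v⟩, ?_⟩, ?_⟩)
    · simp [hMg]
    · rintro _ ⟨a, rfl⟩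
      have htangent := (hFconc v).le_add_fderiv_sub (hFdiff v fun k => pstar k v) a.1
      simp only [hMg]
      linarith
  refine ⟨hsup, fun hfoc q hq hqA => ?_, fun hopt => ?_⟩
  · simpa only [hMg] using hfoc q hq hqA
  · simpa only [hsup] using hopt
end
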